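/- Let P = abcdef be a (simple) hexagon with vertices labeled counterclockwise, and let {a, c, e} be an independent triple (no two are endpoints of a common edge). If the open triangle with vertices a, c, e is contained in P, then the intersection of that triangle with Wedge(a) is a triangle of the form conv(a, c', e') minus its boundary, where the segment c'e' is a nondegenerate subsegment of the segment ce. -/

import Mathlib

open scoped BigOperators

/-- Points in the plane. -/
abbrev Pt := ℝ × ℝ

/-- 2×2 determinant (cross product) of two plane vectors. -/
noncomputable def det2 (p q : Pt) : ℝ := p.1 * q.2 - p.2 * q.1

/-- Open half-plane strictly to the left of the directed line from `p` to `q`. -/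
def Lhp (p q : Pt) : Set Pt := {x | 0 < det2 (q - p) (x - p)}

/-- Open half-plane strictly to the right of the directed line from `p` to `q`. -/
def Rhp (p q : Pt) : Set Pt := {x | det2 (q - p) (x - p) < 0}

/-- The boundary of the polygon with vertices `v 0, …, v (n-1)`:
the union of its (cyclically consecutive) edges. -/
def polyBoundary {n : ℕ} [NeZero n] (v : Fin n → Pt) : Set Pt :=
  ⋃ i : Fin n, segment ℝ (v i) (v (i + 1))

/-- `v` describes a simple polygon: at least 3 distinct vertices, and two distinct
edges may only meet at a common endpoint. -/
def IsSimplePolygon {n : ℕ} [NeZero n] (v : Fin n → Pt) : Prop :=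
  3 ≤ n ∧ Function.Injective v ∧
    ∀ i j : Fin n, i ≠ j →
      segment ℝ (v i) (v (i + 1)) ∩ segment ℝ (v j) (v (j + 1)) ⊆
        ({v i, v (i + 1)} ∩ {v j, v (j + 1)} : Set Pt)

/-- The interior of the polygon: the union of the bounded connected components of the
complement of the boundary. -/
def polyInterior {n : ℕ} [NeZero n] (v : Fin n → Pt) : Set Pt :=
  {x | x ∉ polyBoundary v ∧
    Bornology.IsBounded (connectedComponentIn (polyBoundary v)ᶜ x)}

/-- The (closed) polygonal region: interior together with boundary. -/
def polyRegion {n : ℕ} [NeZero n] (v : Fin n → Pt) : Set Pt :=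
  polyBoundary v ∪ polyInterior v

/-- Twice the signed area of the polygon. -/
noncomputable def signedArea2 {n : ℕ} [NeZero n] (v : Fin n → Pt) : ℝ :=
  ∑ i : Fin n, det2 (v i) (v (i + 1))

/-- The vertices are listed in counterclockwise order. -/
def IsCCW {n : ℕ} [NeZero n] (v : Fin n → Pt) : Prop := 0 < signedArea2 v

/-- The vertex `v i` of a counterclockwise polygon is strictly convex
(interior angle strictly less than 180°). -/
def StrictlyConvexAt {n : ℕ} [NeZero n] (v : Fin n → Pt) (i : Fin n) : Prop :=
  0 < det2 (v i - v (i - 1)) (v (i + 1) - v i)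

/-- The vertex `v i` of a counterclockwise polygon is reflex
(interior angle greater than or equal to 180°). -/
def ReflexAt {n : ℕ} [NeZero n] (v : Fin n → Pt) (i : Fin n) : Prop :=
  det2 (v i - v (i - 1)) (v (i + 1) - v i) ≤ 0

/-- The wedge of vertex `v i`:  `L(v⁻, v) ∩ R(v⁺, v) ∩ interior P`. -/
def Wedge {n : ℕ} [NeZero n] (v : Fin n → Pt) (i : Fin n) : Set Pt :=
  Lhp (v (i - 1)) (v i) ∩ Rhp (v (i + 1)) (v i) ∩ polyInterior v

/-- `x` sees `y` inside the polygon `v`: the segment `xy` is contained in the region. -/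
def Sees {n : ℕ} [NeZero n] (v : Fin n → Pt) (x y : Pt) : Prop :=
  segment ℝ x y ⊆ polyRegion v

/-- The kernel of the polygon: the points of the region that see every point of it. -/
def polyKernel {n : ℕ} [NeZero n] (v : Fin n → Pt) : Set Pt :=
  {x ∈ polyRegion v | ∀ y ∈ polyRegion v, segment ℝ x y ⊆ polyRegion v}

/-- The open triangle on three points. -/
def openTriangle (a b c : Pt) : Set Pt := interior (convexHull ℝ {a, b, c})

/-- `a b c d` (in counterclockwise order) form a strictly convex quadrilateral. -/
def StrictConvexQuad (a b c d : Pt) : Prop :=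
  0 < det2 (b - a) (c - b) ∧ 0 < det2 (c - b) (d - c) ∧
    0 < det2 (d - c) (a - d) ∧ 0 < det2 (a - d) (b - a)

/-- The closed region of a quadrilateral cell. -/
noncomputable def quadSet (q : Pt × Pt × Pt × Pt) : Set Pt :=
  convexHull ℝ {q.1, q.2.1, q.2.2.1, q.2.2.2}

/-- The closed region of a triangular cell. -/
noncomputable def triSet (t : Pt × Pt × Pt) : Set Pt :=
  convexHull ℝ {t.1, t.2.1, t.2.2}

/-- The vertices of a quadrilateral cell. -/
noncomputable def quadVerts (q : Pt × Pt × Pt × Pt) : Finset Pt :=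
  {q.1, q.2.1, q.2.2.1, q.2.2.2}

/-- The vertices of a triangular cell. -/
noncomputable def triVerts (t : Pt × Pt × Pt) : Finset Pt :=
  {t.1, t.2.1, t.2.2}

/-- A strictly convex quadrangulation of a finite planar point set `S`:
a decomposition of `conv S` into strictly convex quadrilaterals and at most one
(nondegenerate) triangle, with pairwise disjoint interiors, whose vertex set contains
`S`, and such that no point of `S` is interior to a cell. -/
structure ConvexQuadrangulation (S : Finset Pt) where
  quads : Finset (Pt × Pt × Pt × Pt)
  tris : Finset (Pt × Pt × Pt)
  tris_card : tris.card ≤ 1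
  quads_convex : ∀ q ∈ quads, StrictConvexQuad q.1 q.2.1 q.2.2.1 q.2.2.2
  tris_nondeg : ∀ t ∈ tris, 0 < det2 (t.2.1 - t.1) (t.2.2 - t.2.1)
  covers : ((⋃ q ∈ quads, quadSet q) ∪ ⋃ t ∈ tris, triSet t) = convexHull ℝ (S : Set Pt)
  cells_disjoint : ((quadSet '' quads) ∪ (triSet '' tris)).Pairwise
    fun A B => interior A ∩ interior B = ∅
  verts_cover : (S : Set Pt) ⊆
    ((quads.biUnion quadVerts ∪ tris.biUnion triVerts : Finset Pt) : Set Pt)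
  no_pt_in_quad_interior : ∀ q ∈ quads, ∀ p ∈ S, p ∉ interior (quadSet q)
  no_pt_in_tri_interior : ∀ t ∈ tris, ∀ p ∈ S, p ∉ interior (triSet t)

/-- The Steiner points of a quadrangulation: vertices of the decomposition not in `S`. -/
noncomputable def steinerPoints (S : Finset Pt) (Q : ConvexQuadrangulation S) : Finset Pt :=
  (Q.quads.biUnion quadVerts ∪ Q.tris.biUnion triVerts) \ S

/-!
A point of an open subset of the polygonal region is never on the boundary: near each of its points
the boundary is a bent line with two connected sides, so the boundary points interior to the region
form a clopen subset of the connected boundary, and a leftmost boundary point is not among them.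
Hence `T = △(ace)` lies in the interior of the polygon, so that `T ∩ Wedge(a)` is `T` cut by two
half-planes through `a`. Each cut leaves a triangle with apex `a` and base on `ce`, provided that
what remains is nonempty.

If `b` were on the same side of `ac` as `e`, the edges `de` and `ef`, which cannot cross `ab`, `bc`
or `T`, would be trapped in the triangle `acb`. The whole polygon would lie on that side of `ac` and
the open diagonal `ac`, a limit of points of `T`, would be both on the edge of its convex hull and
inside it. So the three ears `abc`, `cde`, `efa` lie outside `T`, and comparing signed areas shows
that `ace` is counterclockwise or degenerate. The rays bounding the wedge at `a` then leave a common
part of the cone spanned by `ac` and `ae`, since otherwise `ab` would cross `ef` or `af` would cross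
`bc`.
-/

section

open Set Filter Topology

section Segments

variable {E : Type*} [AddCommGroup E] [Module ℝ E] {p q r a b x : E}

lemma mem_segment_or_mem_segment_of_sameRay (h : SameRay ℝ (a - p) (b - p)) :
    a ∈ segment ℝ p b ∨ b ∈ segment ℝ p a := by
  rw [mem_segment_iff_wbtw, mem_segment_iff_wbtw]
  exact wbtw_total_of_sameRay_vsub_left h

lemma not_sameRay_of_mem_segment (hp : p ∈ segment ℝ a b) (ha : p ≠ a) (hb : p ≠ b) :
    ¬SameRay ℝ (a - p) (b - p) := by
  intro h
  rw [mem_segment_iff_wbtw] at hp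
  rcases mem_segment_or_mem_segment_of_sameRay h with hw | hw <;> rw [mem_segment_iff_wbtw] at hw
  · exact ha (hp.swap_left_iff.1 hw).symm
  · exact hb (hp.symm.swap_left_iff.1 hw).symm

lemma segment_eq_union_of_mem (hp : p ∈ segment ℝ a b) :
    segment ℝ a b = segment ℝ p a ∪ segment ℝ p b := by
  refine Subset.antisymm (fun x hx => ?_) (union_subset ?_ ?_)
  · rw [mem_segment_iff_wbtw] at hp hx
    simp only [mem_union, mem_segment_iff_wbtw]
    have hray : SameRay ℝ (p -ᵥ a) (x -ᵥ a) := by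
      refine hp.sameRay_vsub_left.trans hx.sameRay_vsub_left.symm fun h => .inl ?_
      obtain rfl := vsub_eq_zero_iff_eq.1 h
      rw [(wbtw_self_iff ℝ).1 hp, vsub_self]
    exact (wbtw_total_of_sameRay_vsub_left hray).symm.imp Wbtw.symm hx.trans_left_right
  · exact (convex_segment a b).segment_subset hp (left_mem_segment _ _ _)
  · exact (convex_segment a b).segment_subset hp (right_mem_segment _ _ _)

lemma affineMap_add_smul_sub (g : E →ᵃ[ℝ] ℝ) (p q x : E) (t : ℝ) :
    g (x + t • (q - p)) = g x + t * (g q - g p) := by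
  rw [add_comm x, ← vadd_eq_add, g.map_vadd, map_smul, ← vsub_eq_sub q p, g.linearMap_vsub,
    vsub_eq_sub, vadd_eq_add, smul_eq_mul, add_comm]

lemma convex_setOf_affineMap_pos (g : E →ᵃ[ℝ] ℝ) : Convex ℝ {x | 0 < g x} :=
  (convex_Ioi 0).affine_preimage g

lemma convex_setOf_affineMap_neg (g : E →ᵃ[ℝ] ℝ) : Convex ℝ {x | g x < 0} :=
  (convex_Iio 0).affine_preimage g

lemma eq_left_of_mem_segment {g : E →ᵃ[ℝ] ℝ} (hp : 0 ≤ g p) (hq : 0 < g q)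
    (hx : x ∈ segment ℝ p q) (hgx : g x ≤ 0) : x = p := by
  obtain ⟨s, t, hs, ht, hst, rfl⟩ := hx
  rw [Convex.combo_affine_apply hst, smul_eq_mul, smul_eq_mul] at hgx
  obtain rfl : t = 0 := by
    by_contra hne
    have := ht.lt_of_ne' hne
    nlinarith [mul_pos this hq, mul_nonneg hs hp]
  obtain rfl : s = 1 := by linarith
  simp

lemma exists_mem_openSegment_affineMap_eq_zero {g : E →ᵃ[ℝ] ℝ} (hq : 0 < g q) (hr : g r < 0) :
    ∃ z ∈ openSegment ℝ q r, g z = 0 := by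
  have hlt : 0 < g q - g r := by linarith
  have hst : -g r / (g q - g r) + g q / (g q - g r) = 1 := by
    rw [← add_div, div_eq_one_iff_eq hlt.ne']; ring
  refine ⟨_, ⟨_, _, div_pos (neg_pos.2 hr) hlt, div_pos hq hlt, hst, rfl⟩, ?_⟩
  rw [Convex.combo_affine_apply hst, smul_eq_mul, smul_eq_mul]
  ring

end Segments

section NormedSegments

variable {E : Type*} [NormedAddCommGroup E] [NormedSpace ℝ E] {p a x : E}

lemma isCompact_segment (a b : E) : IsCompact (segment ℝ a b) := by
  rw [segment_eq_image_lineMap]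
  exact isCompact_Icc.image AffineMap.lineMap_continuous

lemma eventually_mem_segment_iff_sameRay (h : p ≠ a) :
    ∀ᶠ x in 𝓝 p, x ∈ segment ℝ p a ↔ SameRay ℝ (a - p) (x - p) := by
  filter_upwards [Metric.ball_mem_nhds p (dist_pos.2 h)] with x hx
  rw [mem_segment_iff_wbtw]
  refine ⟨fun hx => hx.sameRay_vsub_left.symm, fun hray => ?_⟩
  refine (wbtw_total_of_sameRay_vsub_left hray).resolve_left fun hw => ?_
  have := hw.dist_add_dist
  have := Metric.mem_ball'.1 hx
  linarith [dist_nonneg (x := a) (y := x)]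

lemma mem_closure_of_forall_add_smul_mem {S : Set E} {u : E} (h : ∀ δ > (0 : ℝ), x + δ • u ∈ S) :
    x ∈ closure S := by
  have hlim : Tendsto (fun δ : ℝ => x + δ • u) (𝓝[>] 0) (𝓝 x) := by
    have : Continuous fun δ : ℝ => x + δ • u := by fun_prop
    simpa using (this.tendsto 0).mono_left nhdsWithin_le_nhds
  exact mem_closure_of_tendsto hlim (eventually_mem_nhdsWithin.mono h)

end NormedSegments

section Orientation

/-- The orientation test `x ↦ det2 (q - p) (x - p)` (twice the signed area of `p q x`), packaged as
an affine map in its last argument: it is positive to the left of the directed line `p q`. -/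
noncomputable def orient (p q : Pt) : Pt →ᵃ[ℝ] ℝ where
  toFun x := det2 (q - p) (x - p)
  linear := (q - p).1 • LinearMap.snd ℝ ℝ ℝ - (q - p).2 • LinearMap.fst ℝ ℝ ℝ
  map_vadd' x u := by
    simp only [det2, vadd_eq_add, LinearMap.sub_apply, LinearMap.smul_apply, LinearMap.snd_apply,
      LinearMap.fst_apply, smul_eq_mul, Prod.fst_sub, Prod.snd_sub, Prod.fst_add, Prod.snd_add]
    ring

variable {p q r s x : Pt}

lemma orient_eq (p q x : Pt) :
    orient p q x = (q.1 - p.1) * (x.2 - p.2) - (q.2 - p.2) * (x.1 - p.1) := rfl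

lemma orient_rotate (p q r : Pt) : orient q r p = orient p q r := by
  simp only [orient_eq]; ring

lemma orient_swap (p q r : Pt) : orient p r q = -orient p q r := by
  simp only [orient_eq]; ring

lemma orient_symm (p q x : Pt) : orient q p x = -orient p q x := by
  simp only [orient_eq]; ring

lemma orient_reverse (p q r : Pt) : orient r q p = -orient p q r := by
  simp only [orient_eq]; ring

@[simp] lemma orient_left (p q : Pt) : orient p q p = 0 := by simp [orient_eq]

@[simp] lemma orient_right (p q : Pt) : orient p q q = 0 := by simp only [orient_eq]; ring

@[simp] lemma orient_self (p x : Pt) : orient p p x = 0 := by simp [orient_eq]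

lemma exists_orient_pos (h : p ≠ q) : ∃ r, 0 < orient p q r := by
  refine ⟨p + (-(q - p).2, (q - p).1), ?_⟩
  have hne : q.1 - p.1 ≠ 0 ∨ q.2 - p.2 ≠ 0 := by
    by_contra! h₀
    exact h (Prod.ext (sub_eq_zero.1 h₀.1).symm (sub_eq_zero.1 h₀.2).symm)
  simp only [orient_eq, Prod.fst_add, Prod.snd_add, Prod.fst_sub, Prod.snd_sub, add_sub_cancel_left]
  rcases hne with h | h <;>
    nlinarith [sq_nonneg (q.1 - p.1), sq_nonneg (q.2 - p.2), sq_pos_of_ne_zero h]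

lemma isOpenMap_orient (h : p ≠ q) : IsOpenMap (orient p q) := by
  rw [← AffineMap.isOpenMap_linear_iff]
  refine LinearMap.isOpenMap_of_finiteDimensional _ (LinearMap.surjective fun h₀ => ?_)
  obtain ⟨r, hr⟩ := exists_orient_pos h
  exact hr.ne' (DFunLike.congr_fun h₀ (r - p))

lemma exists_sub_eq_smul_of_orient_eq_zero (h : p ≠ q) (hx : orient p q x = 0) :
    ∃ t : ℝ, x - p = t • (q - p) := by
  obtain ⟨r, hr⟩ := exists_orient_pos h
  have hcramer : orient p q r • (x - p) = orient p x r • (q - p) + orient p q x • (r - p) := by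
    ext <;> simp only [orient_eq, Prod.fst_add, Prod.snd_add, Prod.fst_sub, Prod.snd_sub,
      Prod.smul_fst, Prod.smul_snd, smul_eq_mul] <;> ring
  rw [hx, zero_smul, add_zero] at hcramer
  exact ⟨(orient p q r)⁻¹ * orient p x r, by rw [mul_smul, ← hcramer, inv_smul_smul₀ hr.ne']⟩

lemma continuous_orient (p q : Pt) : Continuous (orient p q) :=
  AffineMap.continuous_of_finiteDimensional _

lemma affineMap_apply_eq (g : Pt →ᵃ[ℝ] ℝ) (x : Pt) :
    g x = x.1 * g.linear (1, 0) + x.2 * g.linear (0, 1) + g 0 := by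
  have hx : x.1 • ((1, 0) : Pt) + x.2 • ((0, 1) : Pt) = x := by ext <;> simp
  rw [← smul_eq_mul, ← smul_eq_mul, ← map_smul, ← map_smul, ← map_add, hx]
  exact congrFun (AffineMap.decomp g) x

lemma orient_mul_affineMap (g : Pt →ᵃ[ℝ] ℝ) (p q r x : Pt) :
    orient p q r * g x = orient q r x * g p + orient r p x * g q + orient p q x * g r := by
  rw [affineMap_apply_eq g x, affineMap_apply_eq g p, affineMap_apply_eq g q,
    affineMap_apply_eq g r]
  simp only [orient_eq]
  ring

lemma orient_smul_eq (p q r x : Pt) :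
    orient p q r • x = orient q r x • p + orient r p x • q + orient p q x • r := by
  ext <;> simp only [orient_eq, Prod.fst_add, Prod.snd_add, Prod.smul_fst, Prod.smul_snd,
    smul_eq_mul] <;> ring

lemma orient_add_orient_add_orient (p q r x : Pt) :
    orient q r x + orient r p x + orient p q x = orient p q r := by
  simp only [orient_eq]; ring

lemma mem_segment_of_orient_eq_zero (h : 0 < orient p q r) (h₀ : orient p q x = 0)
    (hq : 0 ≤ orient q r x) (hp : 0 ≤ orient r p x) : x ∈ segment ℝ p q := by
  have hsum := orient_add_orient_add_orient p q r x
  have hx := orient_smul_eq p q r x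
  rw [h₀, zero_smul, add_zero] at hx
  refine ⟨orient q r x / orient p q r, orient r p x / orient p q r, by positivity, by positivity,
    by rw [← add_div, div_eq_one_iff_eq h.ne']; linarith, ?_⟩
  rw [div_eq_inv_mul, div_eq_inv_mul, mul_smul, mul_smul, ← smul_add, ← hx, inv_smul_smul₀ h.ne']

lemma segment_inter_segment_nonempty (hr : 0 ≤ orient p q r) (hs : orient p q s ≤ 0)
    (hp : orient r s p ≤ 0) (hq : 0 ≤ orient r s q) (hlt : orient p q s < orient p q r) :
    (segment ℝ p q ∩ segment ℝ r s).Nonempty := by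
  set D := orient p q r - orient p q s with hD
  have hD0 : 0 < D := sub_pos.2 hlt
  have hD' : orient r s q - orient r s p = D := by simp only [hD, orient_eq]; ring
  have hcomb : orient r s q • p - orient r s p • q = orient p q r • s - orient p q s • r := by
    ext <;> simp only [orient_eq, Prod.fst_sub, Prod.snd_sub, Prod.smul_fst, Prod.smul_snd,
      smul_eq_mul] <;> ring
  refine ⟨D⁻¹ • (orient r s q • p - orient r s p • q),
    ⟨orient r s q / D, -orient r s p / D, by positivity, ?_, ?_, ?_⟩,
    ⟨-orient p q s / D, orient p q r / D, ?_, by positivity, ?_, ?_⟩⟩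
  · exact div_nonneg (neg_nonneg.2 hp) hD0.le
  · rw [← add_div, div_eq_one_iff_eq hD0.ne']; linarith
  · simp only [div_eq_inv_mul, mul_smul, smul_add, neg_smul, smul_neg, sub_eq_add_neg]
  · exact div_nonneg (neg_nonneg.2 hs) hD0.le
  · rw [← add_div, div_eq_one_iff_eq hD0.ne']; linarith
  · rw [hcomb]
    simp only [div_eq_inv_mul, mul_smul, smul_sub, neg_smul, smul_neg]
    abel

end Orientation

section Triangle

variable {p q r x z : Pt}

lemma ne_of_orient_ne_zero (h : orient p q r ≠ 0) : p ≠ q ∧ q ≠ r ∧ r ≠ p := by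
  refine ⟨?_, ?_, ?_⟩ <;> rintro rfl <;> simp at h

lemma convexHull_triple (h : 0 < orient p q r) :
    convexHull ℝ {p, q, r} =
      orient q r ⁻¹' Ici 0 ∩ orient r p ⁻¹' Ici 0 ∩ orient p q ⁻¹' Ici 0 := by
  apply Subset.antisymm
  · have hconv (a b : Pt) : Convex ℝ (orient a b ⁻¹' Ici 0) := (convex_Ici 0).affine_preimage _
    refine convexHull_min ?_ (((hconv q r).inter (hconv r p)).inter (hconv p q))
    rintro y (rfl | rfl | rfl)
    · simp [orient_rotate y q r, h.le]
    · simp [← orient_rotate r p y, h.le]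
    · simp [h.le]
  · rintro x ⟨⟨hp, hq⟩, hr⟩
    have hsum := orient_add_orient_add_orient p q r x
    have hx : x = ∑ i, ![orient q r x / orient p q r, orient r p x / orient p q r,
        orient p q x / orient p q r] i • ![p, q, r] i := by
      simp only [Fin.sum_univ_three, Matrix.cons_val, div_eq_inv_mul, mul_smul, ← smul_add]
      rw [← orient_smul_eq, inv_smul_smul₀ h.ne']
    rw [hx]
    refine (convex_convexHull ℝ _).sum_mem ?_ ?_ fun i _ => subset_convexHull ℝ _ ?_
    · simp only [mem_preimage, mem_Ici] at hp hq hr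
      intro i _
      fin_cases i <;> exact div_nonneg ‹_› h.le
    · simp only [Fin.sum_univ_three, Matrix.cons_val, ← add_div, hsum, div_self h.ne']
    · fin_cases i <;> simp

lemma openTriangle_eq (h : 0 < orient p q r) :
    openTriangle p q r = orient q r ⁻¹' Ioi 0 ∩ orient r p ⁻¹' Ioi 0 ∩ orient p q ⁻¹' Ioi 0 := by
  have hint {a b : Pt} (hab : a ≠ b) :
      interior (orient a b ⁻¹' Ici 0) = orient a b ⁻¹' Ioi 0 := by
    rw [← (isOpenMap_orient hab).preimage_interior_eq_interior_preimage (continuous_orient a b),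
      interior_Ici]
  obtain ⟨hpq, hqr, hrp⟩ := ne_of_orient_ne_zero h.ne'
  rw [openTriangle, convexHull_triple h, interior_inter, interior_inter, hint hpq, hint hqr,
    hint hrp]

lemma mem_openTriangle_iff (h : 0 < orient p q r) :
    x ∈ openTriangle p q r ↔ 0 < orient q r x ∧ 0 < orient r p x ∧ 0 < orient p q x := by
  rw [openTriangle_eq h, mem_inter_iff, mem_inter_iff, and_assoc]
  rfl

lemma openTriangle_eq_empty (hqr : q ≠ r) (h : orient p q r = 0) : openTriangle p q r = ∅ := by
  have hsub : convexHull ℝ {p, q, r} ⊆ orient q r ⁻¹' {0} := by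
    refine convexHull_min ?_ ((convex_singleton 0).affine_preimage _)
    rintro y (rfl | rfl | rfl)
    · exact (orient_rotate _ _ _).trans h
    · exact orient_left _ _
    · exact orient_right _ _
  refine subset_empty_iff.1 ((interior_mono hsub).trans ?_)
  rw [← (isOpenMap_orient hqr).preimage_interior_eq_interior_preimage (continuous_orient q r),
    interior_singleton, preimage_empty]

lemma openTriangle_nonempty (h : 0 < orient p q r) : (openTriangle p q r).Nonempty := by
  refine ⟨(3⁻¹ : ℝ) • (p + q + r), (mem_openTriangle_iff h).2 ?_⟩
  have h3 (y z : Pt) : orient y z ((3⁻¹ : ℝ) • (p + q + r)) =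
      (orient y z p + orient y z q + orient y z r) / 3 := by
    simp only [orient_eq, Prod.smul_fst, Prod.smul_snd, Prod.fst_add, Prod.snd_add, smul_eq_mul]
    ring
  simp only [h3, orient_left, orient_right, orient_rotate p q r, orient_rotate q r p]
  refine ⟨?_, ?_, ?_⟩ <;> linarith

lemma convexHull_subset_closure_openTriangle (h : 0 < orient p q r) :
    convexHull ℝ {p, q, r} ⊆ closure (openTriangle p q r) := by
  rw [openTriangle, (convex_convexHull ℝ _).closure_interior_eq_closure_of_nonempty_interior
    (openTriangle_nonempty h)]
  exact subset_closure

lemma openTriangle_rotate (p q r : Pt) : openTriangle q r p = openTriangle p q r := by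
  rw [openTriangle, openTriangle, pair_comm r p, insert_comm q p]

lemma convex_openTriangle (p q r : Pt) : Convex ℝ (openTriangle p q r) :=
  (convex_convexHull ℝ _).interior

lemma isOpen_openTriangle (p q r : Pt) : IsOpen (openTriangle p q r) := isOpen_interior

lemma subset_openTriangle_of_isPreconnected {s : Set Pt} (h : 0 < orient p q r)
    (hs : IsPreconnected s) (hne : (s ∩ openTriangle p q r).Nonempty)
    (hpq : Disjoint s (segment ℝ p q)) (hqr : Disjoint s (segment ℝ q r))
    (hrp : Disjoint s (segment ℝ r p)) : s ⊆ openTriangle p q r := by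
  refine hs.subset_of_closure_inter_subset (isOpen_openTriangle p q r) hne ?_
  rintro x ⟨hx, hxs⟩
  have hnonneg (a b : Pt) (hab : ∀ y ∈ openTriangle p q r, 0 < orient a b y) :
      0 ≤ orient a b x :=
    closure_minimal (fun y hy => (hab y hy).le)
      (isClosed_Ici.preimage (continuous_orient a b)) hx
  have hx₁ := hnonneg q r fun y hy => ((mem_openTriangle_iff h).1 hy).1
  have hx₂ := hnonneg r p fun y hy => ((mem_openTriangle_iff h).1 hy).2.1
  have hx₃ := hnonneg p q fun y hy => ((mem_openTriangle_iff h).1 hy).2.2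
  have hq := orient_rotate p q r
  have hp := orient_rotate q r p
  refine (mem_openTriangle_iff h).2
    ⟨hx₁.lt_of_ne' fun h₀ => ?_, hx₂.lt_of_ne' fun h₀ => ?_, hx₃.lt_of_ne' fun h₀ => ?_⟩
  · exact hqr.notMem_of_mem_left hxs (mem_segment_of_orient_eq_zero (hq ▸ h) h₀ hx₂ hx₃)
  · exact hrp.notMem_of_mem_left hxs
      (mem_segment_of_orient_eq_zero (hp ▸ hq ▸ h) h₀ hx₃ hx₁)
  · exact hpq.notMem_of_mem_left hxs (mem_segment_of_orient_eq_zero h h₀ hx₁ hx₂)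

lemma openSegment_subset_openTriangle (h : 0 < orient p q r) {y : Pt}
    (hy : y ∈ openSegment ℝ p q) : openSegment ℝ r y ⊆ openTriangle p q r := by
  obtain ⟨s, t, hs, ht, hst, rfl⟩ := hy
  rintro _ ⟨s', t', hs', ht', hst', rfl⟩
  have hq := orient_rotate p q r
  have hp := orient_rotate q r p
  rw [mem_openTriangle_iff h]
  simp only [Convex.combo_affine_apply hst', Convex.combo_affine_apply hst, orient_left,
    orient_right, hp, hq, smul_eq_mul, mul_zero, zero_add, add_zero]
  exact ⟨by positivity, by positivity, by positivity⟩

lemma orient_pos_of_mem_openSegment (h : 0 < orient p q r) (hz : z ∈ openSegment ℝ q r) :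
    0 < orient p q z ∧ 0 < orient p z r := by
  obtain ⟨s, t, hs, ht, hst, rfl⟩ := hz
  rw [orient_swap p r, neg_pos]
  simp only [Convex.combo_affine_apply hst, orient_right, orient_swap p q r, smul_eq_mul, mul_zero,
    zero_add, add_zero, mul_neg, neg_neg_iff_pos]
  exact ⟨by positivity, by positivity⟩

lemma affineMap_pos_iff_orient_pos {g : Pt →ᵃ[ℝ] ℝ} (hp : g p = 0) (hq : g q = 0) (hr : 0 < g r)
    (h : 0 < orient p q r) (x : Pt) : 0 < g x ↔ 0 < orient p q x := by
  rw [← mul_pos_iff_of_pos_left h, orient_mul_affineMap g p q r x, hp, hq, mul_zero, mul_zero,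
    zero_add, zero_add, mul_pos_iff_of_pos_right hr]

lemma orient_of_mem_openSegment (hz : z ∈ openSegment ℝ q r) :
    ∃ t > 0, ∀ x, orient q z x = t * orient q r x := by
  obtain ⟨s, t, -, ht, hst, rfl⟩ := hz
  refine ⟨t, ht, fun x => ?_⟩
  obtain rfl : s = 1 - t := by linarith
  simp only [orient_eq, Prod.fst_add, Prod.snd_add, Prod.smul_fst, Prod.smul_snd, smul_eq_mul]
  ring

lemma openTriangle_subset_of_mem_segment {q' r' : Pt} (hq : q' ∈ segment ℝ q r)
    (hr : r' ∈ segment ℝ q r) : openTriangle p q' r' ⊆ openTriangle p q r := by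
  have hsub : segment ℝ q r ⊆ convexHull ℝ {p, q, r} := by
    rw [← convexHull_pair]
    exact convexHull_mono (subset_insert _ _)
  refine interior_mono (convexHull_min ?_ (convex_convexHull ℝ _))
  rintro y (rfl | rfl | rfl)
  exacts [subset_convexHull ℝ _ (mem_insert _ _), hsub hq, hsub hr]

lemma openTriangle_inter_left (h : 0 < orient p q r) (hz : z ∈ openSegment ℝ q r) :
    openTriangle p q r ∩ {x | 0 < orient z p x} = openTriangle p q z := by
  have hz' := (orient_pos_of_mem_openSegment h hz).1
  obtain ⟨t, ht, hqz⟩ := orient_of_mem_openSegment hz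
  refine Subset.antisymm (fun x hx => ?_) fun x hx => ⟨?_, ((mem_openTriangle_iff hz').1 hx).2.1⟩
  · obtain ⟨hx, hzx⟩ := hx
    obtain ⟨hx₁, -, hx₃⟩ := (mem_openTriangle_iff h).1 hx
    exact (mem_openTriangle_iff hz').2 ⟨by rw [hqz]; positivity, hzx, hx₃⟩
  · exact openTriangle_subset_of_mem_segment (left_mem_segment _ _ _)
      (openSegment_subset_segment _ _ _ hz) hx

lemma openTriangle_inter_right (h : 0 < orient p q r) (hz : z ∈ openSegment ℝ q r) :
    openTriangle p q r ∩ {x | 0 < orient p z x} = openTriangle p z r := by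
  have hz' := (orient_pos_of_mem_openSegment h hz).2
  obtain ⟨t, ht, hrz⟩ := orient_of_mem_openSegment (openSegment_symm ℝ q r ▸ hz)
  refine Subset.antisymm (fun x hx => ?_) fun x hx => ⟨?_, ((mem_openTriangle_iff hz').1 hx).2.2⟩
  · obtain ⟨hx, hzx⟩ := hx
    obtain ⟨hx₁, hx₂, -⟩ := (mem_openTriangle_iff h).1 hx
    refine (mem_openTriangle_iff hz').2 ⟨?_, hx₂, hzx⟩
    have hrx := hrz x
    rw [orient_symm z, orient_symm q] at hrx
    nlinarith
  · exact openTriangle_subset_of_mem_segment (openSegment_subset_segment _ _ _ hz)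
      (right_mem_segment _ _ _) hx

lemma exists_openTriangle_eq_inter (h : 0 < orient p q r) {g : Pt →ᵃ[ℝ] ℝ} (hp : g p = 0)
    (hne : (openTriangle p q r ∩ {x | 0 < g x}).Nonempty) :
    ∃ q' ∈ segment ℝ q r, ∃ r' ∈ segment ℝ q r, 0 < orient p q' r' ∧
      openTriangle p q r ∩ {x | 0 < g x} = openTriangle p q' r' := by
  have hg (x : Pt) : orient p q r * g x = orient r p x * g q + orient p q x * g r := by
    rw [orient_mul_affineMap g p q r x, hp, mul_zero, zero_add]
  obtain ⟨x₀, hx₀, hgx₀⟩ := hne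
  obtain ⟨-, hr₀, hq₀⟩ := (mem_openTriangle_iff h).1 hx₀
  have hgx₀ : 0 < orient r p x₀ * g q + orient p q x₀ * g r := hg x₀ ▸ mul_pos h hgx₀
  have hqr : 0 < g q ∨ 0 < g r := by
    by_contra! hle
    nlinarith
  rcases lt_or_ge (g q) 0 with hq | hq
  · have hr : 0 < g r := hqr.resolve_left hq.not_gt
    obtain ⟨z, hz, hgz⟩ := exists_mem_openSegment_affineMap_eq_zero hr hq
    rw [openSegment_symm] at hz
    have hzr := (orient_pos_of_mem_openSegment h hz).2
    refine ⟨z, openSegment_subset_segment _ _ _ hz, r, right_mem_segment _ _ _, hzr, ?_⟩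
    simp only [← openTriangle_inter_right h hz, affineMap_pos_iff_orient_pos hp hgz hr hzr]
  rcases lt_or_ge (g r) 0 with hr | hr
  · have hq : 0 < g q := hqr.resolve_right hr.not_gt
    obtain ⟨z, hz, hgz⟩ := exists_mem_openSegment_affineMap_eq_zero hq hr
    have hqz := (orient_pos_of_mem_openSegment h hz).1
    have hzpq : 0 < orient z p q := by rwa [← orient_rotate]
    refine ⟨q, left_mem_segment _ _ _, z, openSegment_subset_segment _ _ _ hz, hqz, ?_⟩
    simp only [← openTriangle_inter_left h hz, affineMap_pos_iff_orient_pos hgz hp hq hzpq]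
  · refine ⟨q, left_mem_segment _ _ _, r, right_mem_segment _ _ _, h,
      inter_eq_left.2 fun x hx => (mul_pos_iff_of_pos_left h).1 ?_⟩
    obtain ⟨-, hrx, hqx⟩ := (mem_openTriangle_iff h).1 hx
    rw [hg x]
    rcases hqr with hq | hr <;> positivity

lemma exists_openTriangle_eq_inter_inter (h : 0 < orient p q r) {g₁ g₂ : Pt →ᵃ[ℝ] ℝ}
    (hg₁ : g₁ p = 0) (hg₂ : g₂ p = 0)
    (hne : (openTriangle p q r ∩ {x | 0 < g₁ x} ∩ {x | 0 < g₂ x}).Nonempty) :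
    ∃ q' ∈ segment ℝ q r, ∃ r' ∈ segment ℝ q r, 0 < orient p q' r' ∧
      openTriangle p q r ∩ {x | 0 < g₁ x} ∩ {x | 0 < g₂ x} = openTriangle p q' r' := by
  obtain ⟨q₁, hq₁, r₁, hr₁, h₁, heq₁⟩ := exists_openTriangle_eq_inter h hg₁ hne.left
  rw [heq₁] at hne ⊢
  obtain ⟨q₂, hq₂, r₂, hr₂, h₂, heq₂⟩ := exists_openTriangle_eq_inter h₁ hg₂ hne
  have hsub := (convex_segment q r).segment_subset hq₁ hr₁
  exact ⟨q₂, hsub hq₂, r₂, hsub hr₂, h₂, heq₂⟩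

lemma openTriangle_eq_diff_frontier (p q r : Pt) :
    openTriangle p q r = convexHull ℝ {p, q, r} \ frontier (convexHull ℝ {p, q, r}) :=
  (self_sdiff_frontier _).symm

end Triangle

section PolygonTopology

variable {n : ℕ} [NeZero n] {v : Fin n → Pt} {p q x y : Pt}

lemma segment_subset_polyBoundary (v : Fin n → Pt) (i : Fin n) :
    segment ℝ (v i) (v (i + 1)) ⊆ polyBoundary v :=
  subset_iUnion (fun i => segment ℝ (v i) (v (i + 1))) i

lemma isCompact_polyBoundary (v : Fin n → Pt) : IsCompact (polyBoundary v) :=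
  isCompact_iUnion fun _ => isCompact_segment _ _

lemma isPreconnected_polyBoundary (v : Fin n → Pt) : IsPreconnected (polyBoundary v) := by
  have hsurj : Function.Surjective (Fin.ofNat n) := fun i => ⟨i, Fin.ofNat_val_eq_self i⟩
  rw [polyBoundary, ← hsurj.iUnion_comp]
  refine IsPreconnected.iUnion_of_chain (fun k => (convex_segment _ _).isPreconnected) fun k => ?_
  have hk : Fin.ofNat n (Order.succ k) = Fin.ofNat n k + 1 := by
    ext; simp [Fin.val_add, Nat.add_mod]
  rw [hk]
  exact ⟨_, right_mem_segment _ _ _, left_mem_segment _ _ _⟩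

lemma mem_polyInterior_of_isPreconnected {s : Set Pt} (hs : IsPreconnected s)
    (hd : Disjoint s (polyBoundary v)) (hx : x ∈ s) (hy : y ∈ s) (hxi : x ∈ polyInterior v) :
    y ∈ polyInterior v := by
  have hsub := subset_compl_iff_disjoint_right.2 hd
  refine ⟨hsub hy, ?_⟩
  rw [← connectedComponentIn_eq (hs.subset_connectedComponentIn hx hsub hy)]
  exact hxi.2

lemma mem_polyInterior_of_mem_closure (hx : x ∈ closure (polyInterior v))
    (hxv : x ∉ polyBoundary v) : x ∈ polyInterior v := by
  obtain ⟨ε, hε, hball⟩ :=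
    Metric.isOpen_iff.1 (isCompact_polyBoundary v).isClosed.isOpen_compl x hxv
  obtain ⟨y, hyi, hxy⟩ := Metric.mem_closure_iff.1 hx ε hε
  exact mem_polyInterior_of_isPreconnected (convex_ball x ε).isPreconnected
    (subset_compl_iff_disjoint_right.1 hball) (Metric.mem_ball'.2 hxy) (Metric.mem_ball_self hε) hyi

-- The ray from `p` in the direction of `q` escapes to infinity without meeting the boundary.
lemma notMem_polyInterior_of_affineMap {g : Pt →ᵃ[ℝ] ℝ} (hq : g q < g p)
    (hg : ∀ y ∈ polyBoundary v, g p ≤ g y) (hp : p ∉ polyBoundary v) : p ∉ polyInterior v := by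
  rintro ⟨-, hbdd⟩
  have hpq : p ≠ q := by rintro rfl; exact hq.false
  set ray := AffineMap.lineMap (k := ℝ) p q '' Ici 0
  have hray : ray ⊆ (polyBoundary v)ᶜ := by
    rintro _ ⟨s, hs, rfl⟩ hmem
    rcases (mem_Ici.1 hs).eq_or_lt with rfl | hs
    · exact hp (by simpa using hmem)
    · have := hg _ hmem
      rw [AffineMap.apply_lineMap, AffineMap.lineMap_apply_module', smul_eq_mul] at this
      nlinarith
  have hconn : IsPreconnected ray :=
    isPreconnected_Ici.image _ AffineMap.lineMap_continuous.continuousOn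
  have hsub := hconn.subset_connectedComponentIn (x := p) ⟨0, by simp, by simp⟩ hray
  have := (antilipschitzWith_lineMap (𝕜 := ℝ) hpq).isBounded_preimage (hbdd.subset hsub)
  exact not_bddAbove_Ici 0
    (isBounded_iff_bddBelow_bddAbove.1 (this.subset (subset_preimage_image _ _))).2

lemma exists_mem_polyBoundary_notMem_interior_polyRegion (v : Fin n → Pt) :
    ∃ p ∈ polyBoundary v, p ∉ interior (polyRegion v) := by
  let g : Pt →ᵃ[ℝ] ℝ := (LinearMap.fst ℝ ℝ ℝ).toAffineMap
  obtain ⟨p, hp, hmin⟩ := (isCompact_polyBoundary v).exists_isMinOn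
    ⟨v 0, segment_subset_polyBoundary v 0 (left_mem_segment _ _ _)⟩
    (f := g) continuous_fst.continuousOn
  refine ⟨p, hp, fun hi => ?_⟩
  have hcl : p ∈ closure (g ⁻¹' Iio (g p)) := by
    change p ∈ closure (Prod.fst ⁻¹' Iio p.1)
    rw [← isOpenMap_fst.preimage_closure_eq_closure_preimage continuous_fst, closure_Iio]
    exact le_refl p.1
  obtain ⟨y, hyr, hyp⟩ := mem_closure_iff.1 hcl _ isOpen_interior hi
  have hgy (z : Pt) (hz : z ∈ polyBoundary v) : g y < g z := hyp.trans_le (hmin hz)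
  have hyv : y ∉ polyBoundary v := fun h => (hgy y h).false
  have hyleft : g (y - (1, 0)) < g y := by simp [g]
  exact (interior_subset hyr).elim hyv
    (notMem_polyInterior_of_affineMap hyleft (fun z hz => (hgy z hz).le) hyv)

end PolygonTopology

section BentLine

variable {p a b x : Pt}

/-- The bent line with corner `p`: the union of the rays from `p` through `a` and `b`. Away from
degenerate cases, this is the local shape of a polygon at a boundary point. -/
def bentLine (p a b : Pt) : Set Pt :=
  {x | SameRay ℝ (a - p) (x - p) ∨ SameRay ℝ (b - p) (x - p)}

lemma bentLine_comm (p a b : Pt) : bentLine p a b = bentLine p b a :=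
  Set.ext fun _ => or_comm

lemma ne_and_ne_of_not_sameRay (h : ¬SameRay ℝ (a - p) (b - p)) : p ≠ a ∧ p ≠ b :=
  ⟨by rintro rfl; exact h (by simp), by rintro rfl; exact h (by simp)⟩

lemma orient_of_sub_eq_smul {t : ℝ} (h : x - p = t • (a - p)) (q : Pt) :
    orient p x q = t * orient p a q := by
  obtain rfl : x = p + t • (a - p) := by rw [← h]; abel
  simp only [orient_eq, Prod.fst_add, Prod.snd_add, Prod.fst_sub, Prod.snd_sub, Prod.smul_fst,
    Prod.smul_snd, smul_eq_mul]
  ring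

lemma exists_neg_smul_of_orient_eq_zero (h : ¬SameRay ℝ (a - p) (b - p)) (hb : orient p a b = 0) :
    ∃ t : ℝ, t < 0 ∧ b - p = t • (a - p) := by
  obtain ⟨t, ht⟩ := exists_sub_eq_smul_of_orient_eq_zero (ne_and_ne_of_not_sameRay h).1 hb
  refine ⟨t, not_le.1 fun h₀ => h ?_, ht⟩
  rw [ht]
  exact SameRay.nonneg_smul_right (SameRay.refl _) h₀

lemma mem_bentLine_of_orient_eq_zero (h : ¬SameRay ℝ (a - p) (b - p)) (hx : orient p a x = 0)
    (hbx : orient p a b * orient p b x ≤ 0) : x ∈ bentLine p a b := by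
  refine or_iff_not_imp_left.2 fun hax => ?_
  obtain ⟨t, ht, htx⟩ := exists_neg_smul_of_orient_eq_zero hax hx
  rw [orient_swap p x b, orient_of_sub_eq_smul htx] at hbx
  have hab : orient p a b = 0 := by
    by_contra hne
    nlinarith [mul_pos (neg_pos.2 ht) (sq_pos_of_ne_zero hne)]
  obtain ⟨s, hs, hsb⟩ := exists_neg_smul_of_orient_eq_zero h hab
  rw [htx, hsb]
  exact sameRay_smul_smul_of_mul_nonneg (mul_nonneg_of_nonpos_of_nonpos hs.le ht.le)

lemma orient_of_mem_bentLine (h : ¬SameRay ℝ (a - p) (b - p)) (hab : 0 ≤ orient p a b)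
    (hx : x ∈ bentLine p a b) :
    (orient p a x = 0 ∧ orient p b x ≤ 0) ∨ (0 ≤ orient p a x ∧ orient p b x = 0) := by
  obtain ⟨hpa, hpb⟩ := ne_and_ne_of_not_sameRay h
  rcases hx with hx | hx
  · obtain ⟨t, ht, htx⟩ := hx.exists_nonneg_left (sub_ne_zero.2 hpa.symm)
    rw [orient_swap p x, orient_swap p x, orient_of_sub_eq_smul htx.symm,
      orient_of_sub_eq_smul htx.symm, orient_right]
    exact .inl ⟨by simp, neg_nonpos.2 (by positivity)⟩
  · obtain ⟨t, ht, htx⟩ := hx.exists_nonneg_left (sub_ne_zero.2 hpb.symm)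
    rw [orient_swap p x, orient_swap p x, orient_of_sub_eq_smul htx.symm,
      orient_of_sub_eq_smul htx.symm, orient_right, orient_swap p a]
    exact .inr ⟨by rw [mul_neg, neg_neg]; positivity, by simp⟩

lemma exists_orient_pos_orient_neg (h : ¬SameRay ℝ (a - p) (b - p)) (hab : 0 ≤ orient p a b) :
    ∃ d, 0 < orient p a d ∧ orient p b d < 0 := by
  rcases hab.eq_or_lt' with hab | hab
  · obtain ⟨d, hd⟩ := exists_orient_pos (ne_and_ne_of_not_sameRay h).1
    obtain ⟨t, ht, hb⟩ := exists_neg_smul_of_orient_eq_zero h hab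
    refine ⟨d, hd, ?_⟩
    rw [orient_of_sub_eq_smul hb]
    exact mul_neg_of_neg_of_pos ht hd
  · refine ⟨(1 / 2 : ℝ) • a + (1 / 2 : ℝ) • b, ?_⟩
    simp only [Convex.combo_affine_apply (add_halves (1 : ℝ)), orient_right, orient_swap p a b,
      smul_eq_mul]
    constructor <;> linarith

/-- The part of the plane to the left of `p a` and to the right of `p b`. -/
def innerSide (p a b : Pt) : Set Pt := {x | 0 < orient p a x} ∩ {x | orient p b x < 0}

/-- The complementary side of the bent line: to the right of `p a` or to the left of `p b`. -/
def outerSide (p a b : Pt) : Set Pt := {x | orient p a x < 0} ∪ {x | 0 < orient p b x}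

lemma compl_bentLine (h : ¬SameRay ℝ (a - p) (b - p)) (hab : 0 ≤ orient p a b) :
    (bentLine p a b)ᶜ = innerSide p a b ∪ outerSide p a b := by
  refine Subset.antisymm (fun x hx => ?_) fun x hx hbent => ?_
  · by_contra hside
    simp only [innerSide, outerSide, mem_union, mem_inter_iff, mem_ofPred_eq, not_or, not_and,
      not_lt] at hside
    obtain ⟨hin, ha, hb⟩ := hside
    rcases ha.eq_or_lt with ha | ha
    · exact hx (mem_bentLine_of_orient_eq_zero h ha.symm (by nlinarith))
    · rw [bentLine_comm] at hx
      refine hx (mem_bentLine_of_orient_eq_zero (mt SameRay.symm h) (hb.antisymm (hin ha)) ?_)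
      rw [orient_swap]
      nlinarith
  · simp only [innerSide, outerSide, mem_union, mem_inter_iff, mem_ofPred_eq] at hx
    have := orient_of_mem_bentLine h hab hbent
    grind

lemma bentLine_subset_closure_sides (h : ¬SameRay ℝ (a - p) (b - p)) (hab : 0 ≤ orient p a b) :
    bentLine p a b ⊆ closure (innerSide p a b) ∧ bentLine p a b ⊆ closure (outerSide p a b) := by
  obtain ⟨d, had, hbd⟩ := exists_orient_pos_orient_neg h hab
  refine ⟨fun x hx => mem_closure_of_forall_add_smul_mem (u := d - p) fun δ hδ => ?_,
    fun x hx => mem_closure_of_forall_add_smul_mem (u := -(d - p)) fun δ hδ => ?_⟩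
  · have := orient_of_mem_bentLine h hab hx
    simp only [innerSide, mem_inter_iff, mem_ofPred_eq, affineMap_add_smul_sub, orient_left,
      sub_zero]
    have h₁ := mul_pos hδ had
    have h₂ := mul_neg_of_pos_of_neg hδ hbd
    constructor <;> rcases this with ⟨h₃, h₄⟩ | ⟨h₃, h₄⟩ <;> linarith
  · simp only [outerSide, mem_union, mem_ofPred_eq, smul_neg, ← neg_smul,
      affineMap_add_smul_sub, orient_left, sub_zero]
    exact (orient_of_mem_bentLine h hab hx).imp (fun hx => by nlinarith) (fun hx => by nlinarith)

lemma isPreconnected_inter_innerSide {B : Set Pt} (hB : Convex ℝ B) :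
    IsPreconnected (B ∩ innerSide p a b) :=
  (hB.inter ((convex_setOf_affineMap_pos _).inter (convex_setOf_affineMap_neg _))).isPreconnected

lemma isPreconnected_inter_outerSide (h : ¬SameRay ℝ (a - p) (b - p)) (hab : 0 ≤ orient p a b)
    {B : Set Pt} (hB : Convex ℝ B) (hBo : IsOpen B) (hp : p ∈ B) :
    IsPreconnected (B ∩ outerSide p a b) := by
  obtain ⟨d, had, hbd⟩ := exists_orient_pos_orient_neg h hab
  have hcl : p ∈ closure ({x | orient p a x < 0} ∩ {x | 0 < orient p b x}) := by
    refine mem_closure_of_forall_add_smul_mem (u := -(d - p)) fun δ hδ => ?_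
    simp only [mem_inter_iff, mem_ofPred_eq, smul_neg, ← neg_smul, affineMap_add_smul_sub,
      orient_left, sub_zero]
    constructor <;> nlinarith
  obtain ⟨y, hyB, hya, hyb⟩ := mem_closure_iff.1 hcl B hBo hp
  rw [outerSide, inter_union_distrib_left]
  exact IsPreconnected.union y ⟨hyB, hya⟩ ⟨hyB, hyb⟩
    (hB.inter (convex_setOf_affineMap_neg _)).isPreconnected
    (hB.inter (convex_setOf_affineMap_pos _)).isPreconnected

lemma exists_sides_bentLine (h : ¬SameRay ℝ (a - p) (b - p)) :
    ∃ 𝒮 : Set (Set Pt), (bentLine p a b)ᶜ = ⋃₀ 𝒮 ∧ ∀ S ∈ 𝒮, bentLine p a b ⊆ closure S ∧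
      ∀ B, Convex ℝ B → IsOpen B → p ∈ B → IsPreconnected (B ∩ S) := by
  wlog hab : 0 ≤ orient p a b generalizing a b
  · rw [bentLine_comm]
    exact this (mt SameRay.symm h) (by rw [orient_swap]; linarith)
  obtain ⟨hin, hout⟩ := bentLine_subset_closure_sides h hab
  refine ⟨{innerSide p a b, outerSide p a b}, by rw [compl_bentLine h hab, sUnion_pair], ?_⟩
  rintro S (rfl | rfl)
  · exact ⟨hin, fun B hB _ _ => isPreconnected_inter_innerSide hB⟩
  · exact ⟨hout, fun B hB hBo hp => isPreconnected_inter_outerSide h hab hB hBo hp⟩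

end BentLine

section LocalStructure

variable {n : ℕ} [NeZero n] {v : Fin n → Pt} {p : Pt}

lemma eventually_mem_polyBoundary_iff (v : Fin n → Pt) (p : Pt) :
    ∀ᶠ x in 𝓝 p, x ∈ polyBoundary v ↔
      ∃ i, p ∈ segment ℝ (v i) (v (i + 1)) ∧ x ∈ segment ℝ (v i) (v (i + 1)) := by
  have hfar (i : Fin n) : ∀ᶠ x in 𝓝 p, x ∈ segment ℝ (v i) (v (i + 1)) →
      p ∈ segment ℝ (v i) (v (i + 1)) := by
    by_cases hp : p ∈ segment ℝ (v i) (v (i + 1))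
    · exact .of_forall fun _ _ => hp
    · filter_upwards [(isCompact_segment _ _).isClosed.isOpen_compl.mem_nhds hp] with x hx hx'
      exact absurd hx' hx
  filter_upwards [eventually_all.2 hfar] with x hx
  rw [polyBoundary, mem_iUnion]
  exact ⟨fun ⟨i, hi⟩ => ⟨i, hx i hi, hi⟩, fun ⟨i, _, hi⟩ => ⟨i, hi⟩⟩

namespace IsSimplePolygon

lemma eq_left_or_eq_right (hs : IsSimplePolygon v) {i j : Fin n} (hij : i ≠ j)
    (hi : p ∈ segment ℝ (v i) (v (i + 1))) (hj : p ∈ segment ℝ (v j) (v (j + 1))) :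
    p = v i ∨ p = v (i + 1) :=
  (hs.2.2 i j hij ⟨hi, hj⟩).1

lemma add_one_ne (hs : IsSimplePolygon v) (i : Fin n) : i + 1 ≠ i := by
  have := hs.1
  simp only [ne_eq, add_eq_left, Fin.one_eq_zero_iff]
  omega

lemma add_one_add_one_ne (hs : IsSimplePolygon v) (i : Fin n) : i + 1 + 1 ≠ i := by
  obtain ⟨m, rfl⟩ := Nat.exists_eq_add_of_le' hs.1
  rw [add_assoc, ne_eq, add_eq_left, Fin.ext_iff]
  simp [Fin.val_add, Nat.mod_eq_of_lt (show 2 < m + 3 by omega)]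

lemma not_sameRay_vertex (hs : IsSimplePolygon v) (i : Fin n) :
    ¬SameRay ℝ (v i - v (i + 1)) (v (i + 1 + 1) - v (i + 1)) := by
  have hv := hs.2.1
  have hi := hs.add_one_ne i
  have hi' := hs.add_one_ne (i + 1)
  have hi₂ := hs.add_one_add_one_ne i
  intro hray
  rcases mem_segment_or_mem_segment_of_sameRay hray with h | h
  · exact (hs.eq_left_or_eq_right hi h (left_mem_segment _ _ _)).elim
      (hv.ne hi.symm) (hv.ne hi₂.symm)
  · rw [segment_symm] at h
    exact (hs.eq_left_or_eq_right hi.symm h (right_mem_segment _ _ _)).elim (hv.ne hi₂) (hv.ne hi')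

lemma eq_or_eq_of_mem_segment (hs : IsSimplePolygon v) {i j : Fin n}
    (h : v (i + 1) ∈ segment ℝ (v j) (v (j + 1))) : j = i ∨ j = i + 1 := by
  refine or_iff_not_imp_left.2 fun hji => ?_
  refine (hs.eq_left_or_eq_right hji h (right_mem_segment _ _ _)).elim
    (fun h => (hs.2.1 h).symm) fun h => ?_
  exact (hji (add_right_cancel (hs.2.1 h)).symm).elim

lemma exists_bentLine_of_vertex (hs : IsSimplePolygon v) (i : Fin n) :
    ∃ a b, ¬SameRay ℝ (a - v i) (b - v i) ∧
      ∀ᶠ x in 𝓝 (v i), x ∈ polyBoundary v ↔ x ∈ bentLine (v i) a b := by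
  obtain ⟨i, rfl⟩ : ∃ j, j + 1 = i := ⟨i - 1, sub_add_cancel i 1⟩
  refine ⟨v i, v (i + 1 + 1), hs.not_sameRay_vertex i, ?_⟩
  filter_upwards [eventually_mem_polyBoundary_iff v (v (i + 1)),
    eventually_mem_segment_iff_sameRay (hs.2.1.ne (hs.add_one_ne i)),
    eventually_mem_segment_iff_sameRay (hs.2.1.ne (hs.add_one_ne (i + 1)).symm)] with x hx hxl hxr
  rw [hx, bentLine, mem_ofPred_eq, ← hxl, ← hxr, segment_symm ℝ (v (i + 1)) (v i)]
  constructor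
  · rintro ⟨j, hj, hxj⟩
    obtain rfl | rfl := hs.eq_or_eq_of_mem_segment hj
    · exact .inl hxj
    · exact .inr hxj
  · rintro (h | h)
    · exact ⟨i, right_mem_segment _ _ _, h⟩
    · exact ⟨i + 1, left_mem_segment _ _ _, h⟩

lemma exists_bentLine_of_ne_vertex (hs : IsSimplePolygon v) {i : Fin n}
    (hp : p ∈ segment ℝ (v i) (v (i + 1))) (hl : p ≠ v i) (hr : p ≠ v (i + 1)) :
    ∃ a b, ¬SameRay ℝ (a - p) (b - p) ∧
      ∀ᶠ x in 𝓝 p, x ∈ polyBoundary v ↔ x ∈ bentLine p a b := by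
  refine ⟨v i, v (i + 1), not_sameRay_of_mem_segment hp hl hr, ?_⟩
  filter_upwards [eventually_mem_polyBoundary_iff v p, eventually_mem_segment_iff_sameRay hl,
    eventually_mem_segment_iff_sameRay hr] with x hx hxl hxr
  rw [hx, bentLine, mem_ofPred_eq, ← hxl, ← hxr, ← mem_union, ← segment_eq_union_of_mem hp]
  refine ⟨fun ⟨j, hpj, hxj⟩ => ?_, fun hx => ⟨i, hp, hx⟩⟩
  rcases eq_or_ne i j with rfl | hij
  · exact hxj
  · exact ((hs.eq_left_or_eq_right hij hp hpj).elim hl hr).elim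

lemma exists_bentLine (hs : IsSimplePolygon v) (hp : p ∈ polyBoundary v) :
    ∃ a b, ¬SameRay ℝ (a - p) (b - p) ∧
      ∀ᶠ x in 𝓝 p, x ∈ polyBoundary v ↔ x ∈ bentLine p a b := by
  obtain ⟨i, hi⟩ := mem_iUnion.1 hp
  rcases eq_or_ne p (v i) with rfl | hl
  · exact hs.exists_bentLine_of_vertex i
  rcases eq_or_ne p (v (i + 1)) with rfl | hr
  · exact hs.exists_bentLine_of_vertex (i + 1)
  · exact hs.exists_bentLine_of_ne_vertex hi hl hr

end IsSimplePolygon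

end LocalStructure

section BoundaryVersusInterior

variable {n : ℕ} [NeZero n] {v : Fin n → Pt} {p : Pt}

namespace IsSimplePolygon

lemma mem_interior_polyRegion_of_mem_closure (hs : IsSimplePolygon v) (hp : p ∈ polyBoundary v)
    (hcl : p ∈ closure (polyBoundary v ∩ interior (polyRegion v))) :
    p ∈ interior (polyRegion v) := by
  obtain ⟨a, b, hab, hloc⟩ := hs.exists_bentLine hp
  obtain ⟨𝒮, hcompl, h𝒮⟩ := exists_sides_bentLine hab
  obtain ⟨ε, hε, hball⟩ := Metric.eventually_nhds_iff_ball.1 hloc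
  set B := Metric.ball p ε
  obtain ⟨q, hqB, hqv, hqi⟩ := mem_closure_iff.1 hcl B Metric.isOpen_ball (Metric.mem_ball_self hε)
  refine mem_interior.2 ⟨B, fun x hx => ?_, Metric.isOpen_ball, Metric.mem_ball_self hε⟩
  refine or_iff_not_imp_left.2 fun hxv => ?_
  have hx' : x ∈ ⋃₀ 𝒮 := by rwa [← hcompl, mem_compl_iff, ← hball x hx]
  obtain ⟨S, hS, hxS⟩ := hx'
  have hdisj : Disjoint (B ∩ S) (polyBoundary v) := by
    refine disjoint_left.2 fun y hy hyv => ?_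
    have : y ∈ (bentLine p a b)ᶜ := hcompl ▸ ⟨S, hS, hy.2⟩
    exact this ((hball y hy.1).1 hyv)
  obtain ⟨hclS, hconn⟩ := h𝒮 S hS
  obtain ⟨y, ⟨hyB, hyi⟩, hyS⟩ := mem_closure_iff.1 (hclS ((hball q hqB).1 hqv)) _
    (Metric.isOpen_ball.inter isOpen_interior) ⟨hqB, hqi⟩
  have hyv : y ∈ polyInterior v :=
    (interior_subset hyi).resolve_left (hdisj.notMem_of_mem_left ⟨hyB, hyS⟩)
  exact mem_polyInterior_of_isPreconnected
    (hconn B (convex_ball p ε) Metric.isOpen_ball (Metric.mem_ball_self hε)) hdisj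
    ⟨hyB, hyS⟩ ⟨hx, hxS⟩ hyv

-- The boundary points interior to the region form a clopen proper subset of the connected boundary.
lemma disjoint_polyBoundary_interior_polyRegion (hs : IsSimplePolygon v) :
    Disjoint (polyBoundary v) (interior (polyRegion v)) := by
  rw [disjoint_iff_inter_eq_empty, ← not_nonempty_iff_eq_empty]
  intro hne
  obtain ⟨p, hp, hpi⟩ := exists_mem_polyBoundary_notMem_interior_polyRegion v
  have hsub : polyBoundary v ⊆
      interior (polyRegion v) ∪ (closure (polyBoundary v ∩ interior (polyRegion v)))ᶜ :=
    fun x hx => or_iff_not_imp_right.2 fun h =>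
      hs.mem_interior_polyRegion_of_mem_closure hx (not_not.1 h)
  obtain ⟨x, hx, hxi, hxc⟩ := isPreconnected_polyBoundary v _ _ isOpen_interior
    isClosed_closure.isOpen_compl hsub hne ⟨p, hp, (hsub hp).resolve_left hpi⟩
  exact hxc (subset_closure ⟨hx, hxi⟩)

lemma subset_polyInterior_of_isOpen (hs : IsSimplePolygon v) {U : Set Pt} (hU : IsOpen U)
    (h : U ⊆ polyRegion v) : U ⊆ polyInterior v := fun _ hx =>
  (h hx).resolve_left fun hxv =>
    disjoint_left.1 hs.disjoint_polyBoundary_interior_polyRegion hxv (interior_maximal h hU hx)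

end IsSimplePolygon

end BoundaryVersusInterior

section Relabelling

variable {n : ℕ} [NeZero n]

lemma polyBoundary_comp_add (v : Fin n → Pt) (k : Fin n) :
    polyBoundary (fun i => v (i + k)) = polyBoundary v :=
  (Equiv.addRight k).iSup_congr fun i => by
    simp only [Equiv.coe_addRight, add_right_comm]

lemma neg_eq_neg_add_one_add_one (i : Fin n) : -i = -(i + 1) + 1 := by abel

lemma polyBoundary_comp_neg (v : Fin n → Pt) :
    polyBoundary (fun i => v (-i)) = polyBoundary v :=
  ((Equiv.addRight 1).trans (Equiv.neg (Fin n))).iSup_congr fun i => by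
    simp only [Equiv.trans_apply, Equiv.coe_addRight, Equiv.neg_apply,
      ← neg_eq_neg_add_one_add_one, segment_symm ℝ (v (-i))]

lemma polyInterior_congr {m : ℕ} [NeZero m] {v : Fin m → Pt} {w : Fin n → Pt}
    (h : polyBoundary v = polyBoundary w) : polyInterior v = polyInterior w := by
  simp only [polyInterior, h]

namespace IsSimplePolygon

variable {v : Fin n → Pt}

lemma comp_add (hs : IsSimplePolygon v) (k : Fin n) : IsSimplePolygon fun i => v (i + k) := by
  refine ⟨hs.1, hs.2.1.comp (add_left_injective k), fun i j hij => ?_⟩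
  simpa only [add_right_comm] using hs.2.2 (i + k) (j + k) (by simpa using hij)

lemma comp_neg (hs : IsSimplePolygon v) : IsSimplePolygon fun i => v (-i) := by
  refine ⟨hs.1, hs.2.1.comp neg_injective, fun i j hij => ?_⟩
  have := hs.2.2 (-(i + 1)) (-(j + 1)) (by simpa using hij)
  simpa only [← neg_eq_neg_add_one_add_one, segment_symm ℝ (v (-(_ + 1))),
    pair_comm (v (-(_ + 1)))] using this

lemma disjoint_segment (hs : IsSimplePolygon v) {i j : Fin n} (hij : i ≠ j) (hij' : i + 1 ≠ j)
    (hji : j + 1 ≠ i) : Disjoint (segment ℝ (v i) (v (i + 1))) (segment ℝ (v j) (v (j + 1))) := by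
  refine disjoint_left.2 fun p hi hj => ?_
  rcases hs.eq_left_or_eq_right hij hi hj with rfl | rfl <;>
    rcases hs.eq_left_or_eq_right hij.symm hj hi with h | h
  · exact hij (hs.2.1 h)
  · exact hji (hs.2.1 h).symm
  · exact hij' (hs.2.1 h)
  · exact hij (add_right_cancel (hs.2.1 h))

end IsSimplePolygon

end Relabelling

section SharedBase

variable {p q r b : Pt}

lemma openTriangle_inter_openTriangle_nonempty (hr : 0 < orient p q r) (hb : 0 < orient p q b) :
    (openTriangle p q r ∩ openTriangle p q b).Nonempty := by
  have hmid (s t : Pt) : orient s t (midpoint ℝ p q) = (orient s t p + orient s t q) / 2 := by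
    rw [AffineMap.map_midpoint, midpoint_eq_smul_add, invOf_eq_inv, smul_eq_mul, inv_mul_eq_div]
  have hcl : midpoint ℝ p q ∈ closure (openTriangle p q r) := by
    refine convexHull_subset_closure_openTriangle hr (segment_subset_convexHull ?_ ?_
      (midpoint_mem_segment p q)) <;> simp
  have hqb := orient_rotate p q b
  have hbp := orient_rotate q b p
  obtain ⟨x, ⟨hx₁, hx₂⟩, hx⟩ := mem_closure_iff.1 hcl _
    ((isOpen_Ioi.preimage (continuous_orient q b)).inter
      (isOpen_Ioi.preimage (continuous_orient b p)) : IsOpen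
        (orient q b ⁻¹' Ioi 0 ∩ orient b p ⁻¹' Ioi 0))
    ⟨by simp only [mem_preimage, mem_Ioi, hmid, hqb, orient_left]; linarith,
      by simp only [mem_preimage, mem_Ioi, hmid, hqb, hbp, orient_right]; linarith⟩
  exact ⟨x, hx, (mem_openTriangle_iff hb).2 ⟨hx₁, hx₂, ((mem_openTriangle_iff hr).1 hx).2.2⟩⟩

lemma mem_openTriangle_of_disjoint (hr : 0 < orient p q r) (hb : 0 < orient p q b)
    (hqb : Disjoint (insert r (openTriangle p q r)) (segment ℝ q b))
    (hbp : Disjoint (insert r (openTriangle p q r)) (segment ℝ b p)) :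
    r ∈ openTriangle p q b := by
  have hrcl : r ∈ closure (openTriangle p q r) :=
    convexHull_subset_closure_openTriangle hr (subset_convexHull ℝ _ (by simp))
  have hconn : IsPreconnected (insert r (openTriangle p q r)) :=
    (convex_openTriangle p q r).isPreconnected.subset_closure (subset_insert _ _)
      (insert_subset hrcl subset_closure)
  have hpq : Disjoint (insert r (openTriangle p q r)) (segment ℝ p q) := by
    have hzero : segment ℝ p q ⊆ orient p q ⁻¹' {0} := by
      refine ((convex_singleton 0).affine_preimage _).segment_subset ?_ ?_ <;> simp
    refine disjoint_left.2 fun x hx hxs => ?_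
    have hx0 : orient p q x = 0 := hzero hxs
    rcases hx with rfl | hx
    · exact hr.ne' hx0
    · exact ((mem_openTriangle_iff hr).1 hx).2.2.ne' hx0
  exact subset_openTriangle_of_isPreconnected hb hconn
    ((openTriangle_inter_openTriangle_nonempty hr hb).mono
      (inter_subset_inter_left _ (subset_insert _ _))) hpq hqb hbp (mem_insert _ _)

lemma disjoint_segment_of_disjoint_openTriangle {s : Set Pt} (hr : 0 < orient p q r)
    (hs : Convex ℝ s) (hd : Disjoint s (openTriangle p q r)) (hrs : r ∈ s) (hp : p ∉ s)
    (hq : q ∉ s) : Disjoint s (segment ℝ p q) := by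
  refine disjoint_left.2 fun y hy hypq => ?_
  have hy' : y ∈ openSegment ℝ p q := mem_openSegment_of_ne_left_right
    (by rintro rfl; exact hp hy) (by rintro rfl; exact hq hy) hypq
  have hmid : midpoint ℝ r y ∈ openSegment ℝ r y := midpoint_mem_openSegment _ _
  exact disjoint_left.1 hd (hs.openSegment_subset hrs hy hmid)
    (openSegment_subset_openTriangle hr hy' hmid)

lemma subset_openTriangle_of_disjoint {s : Set Pt} (hr : 0 < orient p q r) (hb : 0 < orient p q b)
    (hs : Convex ℝ s) (hrs : r ∈ s) (hd : Disjoint s (openTriangle p q r))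
    (hqb : Disjoint (s ∪ openTriangle p q r) (segment ℝ q b))
    (hbp : Disjoint (s ∪ openTriangle p q r) (segment ℝ b p)) : s ⊆ openTriangle p q b := by
  have hsub : insert r (openTriangle p q r) ⊆ s ∪ openTriangle p q r :=
    insert_subset (.inl hrs) subset_union_right
  have hr_mem : r ∈ openTriangle p q b :=
    mem_openTriangle_of_disjoint hr hb (hqb.mono_left hsub) (hbp.mono_left hsub)
  have hqb' := (disjoint_union_left.1 hqb).1
  have hbp' := (disjoint_union_left.1 hbp).1
  have hpq := disjoint_segment_of_disjoint_openTriangle hr hs hd hrs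
    (hbp'.notMem_of_mem_right (right_mem_segment _ _ _))
    (hqb'.notMem_of_mem_right (left_mem_segment _ _ _))
  exact subset_openTriangle_of_isPreconnected hb hs.isPreconnected ⟨r, hrs, hr_mem⟩ hpq hqb' hbp'

end SharedBase

section BoundaryMinimum

variable {n : ℕ} [NeZero n] {v : Fin n → Pt} {g : Pt →ᵃ[ℝ] ℝ} {x : Pt}

lemma affineMap_nonneg_of_mem_polyBoundary (hg : ∀ i, 0 ≤ g (v i)) (hx : x ∈ polyBoundary v) :
    0 ≤ g x := by
  obtain ⟨i, hi⟩ := mem_iUnion.1 hx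
  exact ((convex_Ici (0 : ℝ)).affine_preimage g).segment_subset (hg i) (hg (i + 1)) hi

lemma exists_eq_vertex_of_affineMap_nonpos (hg : ∀ i, 0 ≤ g (v i))
    (hedge : ∀ i, 0 < g (v i) ∨ 0 < g (v (i + 1))) (hx : x ∈ polyBoundary v) (hgx : g x ≤ 0) :
    ∃ i, x = v i := by
  obtain ⟨i, hi⟩ := mem_iUnion.1 hx
  rcases hedge i with h | h
  · rw [segment_symm] at hi
    exact ⟨i + 1, eq_left_of_mem_segment (hg _) h hi hgx⟩
  · exact ⟨i, eq_left_of_mem_segment (hg _) h hi hgx⟩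

end BoundaryMinimum

namespace IsSimplePolygon

section SupportingDiagonal

variable {n : ℕ} [NeZero n] {v : Fin n → Pt}

lemma midpoint_notMem_closure_polyInterior (hs : IsSimplePolygon v) {i j : Fin n} (hij : i ≠ j)
    (hij' : i + 1 ≠ j) (hji : j + 1 ≠ i)
    (hpos : ∀ k, k ≠ i → k ≠ j → 0 < orient (v i) (v j) (v k)) :
    midpoint ℝ (v i) (v j) ∉ closure (polyInterior v) := by
  set z := midpoint ℝ (v i) (v j)
  have hz : orient (v i) (v j) z = 0 := by simp [z, AffineMap.map_midpoint]
  have hnonneg (k : Fin n) : 0 ≤ orient (v i) (v j) (v k) := by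
    rcases eq_or_ne k i with rfl | hki
    · simp
    rcases eq_or_ne k j with rfl | hkj
    · simp
    · exact (hpos k hki hkj).le
  have hedge (k : Fin n) :
      0 < orient (v i) (v j) (v k) ∨ 0 < orient (v i) (v j) (v (k + 1)) := by
    rcases eq_or_ne k i with rfl | hki
    · exact .inr (hpos _ (hs.add_one_ne _) hij')
    rcases eq_or_ne k j with rfl | hkj
    · exact .inr (hpos _ hji (hs.add_one_ne _))
    · exact .inl (hpos k hki hkj)
  have hzv : z ∉ polyBoundary v := by
    intro hmem
    obtain ⟨k, hk⟩ := exists_eq_vertex_of_affineMap_nonpos hnonneg hedge hmem hz.le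
    have hki : k ≠ i := by
      rintro rfl
      exact hij (hs.2.1 ((midpoint_eq_left_iff ℝ).1 hk))
    have hkj : k ≠ j := by
      rintro rfl
      exact hij (hs.2.1 ((midpoint_eq_right_iff ℝ).1 hk))
    exact (hpos k hki hkj).ne (hk ▸ hz).symm
  obtain ⟨q, hq⟩ := exists_orient_pos (hs.2.1.ne hij.symm)
  rw [orient_symm, neg_pos, ← hz] at hq
  refine fun hcl => notMem_polyInterior_of_affineMap hq (fun y hy => ?_) hzv
    (mem_polyInterior_of_mem_closure hcl hzv)
  exact hz ▸ affineMap_nonneg_of_mem_polyBoundary hnonneg hy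

end SupportingDiagonal

section Ears

variable {v : Fin 6 → Pt}

-- If `b` lay on the same side of `ac` as `e`, then `d`, `e`, `f` would be trapped in the triangle
-- `acb`, and the diagonal `ac` would leave the polygon.
lemma orient_ear_nonpos (hs : IsSimplePolygon v) (h : 0 < orient (v 0) (v 2) (v 4))
    (hT : openTriangle (v 0) (v 2) (v 4) ⊆ polyInterior v) :
    orient (v 0) (v 2) (v 1) ≤ 0 := by
  by_contra! hb
  have hTv : Disjoint (polyBoundary v) (openTriangle (v 0) (v 2) (v 4)) :=
    disjoint_left.2 fun x hx hxT => (hT hxT).1 hx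
  have hTb (i : Fin 6) :
      Disjoint (openTriangle (v 0) (v 2) (v 4)) (segment ℝ (v i) (v (i + 1))) :=
    (hTv.mono_left (segment_subset_polyBoundary v i)).symm
  have htrap {j : Fin 6} (h4 : v 4 ∈ segment ℝ (v j) (v (j + 1)))
      (hab : Disjoint (segment ℝ (v j) (v (j + 1))) (segment ℝ (v 0) (v 1)))
      (hbc : Disjoint (segment ℝ (v j) (v (j + 1))) (segment ℝ (v 1) (v 2))) :
      segment ℝ (v j) (v (j + 1)) ⊆ openTriangle (v 0) (v 2) (v 1) := by
    refine subset_openTriangle_of_disjoint h hb (convex_segment _ _) h4 (hTb j).symm ?_ ?_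
    · rw [segment_symm ℝ (v 2)]
      exact disjoint_union_left.2 ⟨hbc, hTb 1⟩
    · rw [segment_symm ℝ (v 1)]
      exact disjoint_union_left.2 ⟨hab, hTb 0⟩
  have hde := htrap (j := 3) (right_mem_segment _ _ _)
    (hs.disjoint_segment (j := 0) (by decide) (by decide) (by decide))
    (hs.disjoint_segment (j := 1) (by decide) (by decide) (by decide))
  have hef := htrap (j := 4) (left_mem_segment _ _ _)
    (hs.disjoint_segment (j := 0) (by decide) (by decide) (by decide))
    (hs.disjoint_segment (j := 1) (by decide) (by decide) (by decide))
  have habove {x : Pt} (hx : x ∈ openTriangle (v 0) (v 2) (v 1)) : 0 < orient (v 0) (v 2) x :=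
    ((mem_openTriangle_iff hb).1 hx).2.2
  have hpos (k : Fin 6) (h0 : k ≠ 0) (h2 : k ≠ 2) : 0 < orient (v 0) (v 2) (v k) := by
    fin_cases k
    · exact absurd rfl h0
    · exact hb
    · exact absurd rfl h2
    · exact habove (hde (left_mem_segment _ _ _))
    · exact h
    · exact habove (hef (right_mem_segment _ _ _))
  refine hs.midpoint_notMem_closure_polyInterior (by decide) (by decide) (by decide) hpos
    (closure_mono hT (convexHull_subset_closure_openTriangle h ?_))
  exact segment_subset_convexHull (by simp) (by simp) (midpoint_mem_segment _ _)

end Ears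

end IsSimplePolygon

section Cone

variable {a b c e f : Pt}

lemma orient_pos_or_of_notMem_segment_left (h : 0 < orient a c e) (hb : 0 ≤ orient a b c)
    (ha : a ∉ segment ℝ b c) : 0 < orient a b c ∨ 0 < orient a b e := by
  by_contra! hneg
  have hsum := orient_add_orient_add_orient b c e a
  have h₀ : orient b c a = 0 := (orient_rotate a b c).trans (hneg.1.antisymm hb)
  have h₁ : orient c e a = orient a c e := orient_rotate a c e
  have h₂ : orient e b a = -orient a b e := orient_reverse a b e
  exact ha (mem_segment_of_orient_eq_zero (r := e) (by linarith) h₀ (by linarith) (by linarith))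

lemma orient_pos_or_of_notMem_segment_right (h : 0 < orient a c e) (hf : 0 ≤ orient f a e)
    (ha : a ∉ segment ℝ e f) : 0 < orient f a e ∨ 0 < orient f a c := by
  by_contra! hneg
  have hsum := orient_add_orient_add_orient e f c a
  have h₀ : orient e f a = 0 :=
    ((orient_rotate a e f).trans (orient_rotate f a e)).trans (hneg.1.antisymm hf)
  have h₁ : orient c e a = orient a c e := orient_rotate a c e
  have h₂ : orient f c a = -orient f a c := orient_swap f a c
  exact ha (mem_segment_of_orient_eq_zero (r := c) (by linarith) h₀ (by linarith) (by linarith))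

lemma orient_mul_lt_orient_mul (h : 0 < orient a c e) (hb : 0 ≤ orient a b c)
    (hf : 0 ≤ orient f a e) (hbe : orient a b e < 0) (hcf : orient f a c < 0)
    (habef : Disjoint (segment ℝ e f) (segment ℝ a b))
    (hbcfa : Disjoint (segment ℝ b c) (segment ℝ a f)) :
    orient a b e * orient f a c < orient a b c * orient f a e := by
  have hplucker : orient a b c * orient f a e - orient a b e * orient f a c =
      -(orient a b f * orient a c e) := by
    simp only [orient_eq]; ring
  rcases lt_or_ge (orient a b f) 0 with hk | hk
  · nlinarith
  have hfba : orient f b a = -orient a b f := orient_reverse a b f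
  have hbca : orient b c a = orient a b c := orient_rotate a b c
  have hefa : orient e f a = orient f a e := (orient_rotate a e f).trans (orient_rotate f a e)
  have hsum_bcf : orient f a c - orient a b f + orient a b c = orient b c f := by
    rw [← orient_add_orient_add_orient b c f a, hfba, hbca, orient_rotate a c f,
      orient_rotate f a c, sub_eq_add_neg]
  have hsum_efb : -orient a b f + orient a b e + orient f a e = orient e f b := by
    rw [← orient_add_orient_add_orient e f b a, hfba, hefa, orient_rotate a b e]
  have hbcf : 0 < orient b c f := by
    by_contra! hle
    refine not_disjoint_iff_nonempty_inter.2 (segment_inter_segment_nonempty ?_ hle ?_ ?_ ?_) hbcfa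
    · rwa [hbca]
    · rwa [orient_swap a b f, neg_nonpos]
    · rw [orient_symm f a c]; linarith
    · linarith
  have hefb : 0 < orient e f b := by
    by_contra! hle
    refine not_disjoint_iff_nonempty_inter.2
      (segment_inter_segment_nonempty ?_ hle hbe.le hk ?_) habef
    · rwa [hefa]
    · linarith
  nlinarith

lemma exists_pos_combination_pos {R : Type*} [CommRing R] [LinearOrder R] [IsStrictOrderedRing R]
    {p q r s : R} (hp : 0 ≤ p) (hs : 0 ≤ s) (hpq : 0 < p ∨ 0 < q)
    (hsr : 0 < s ∨ 0 < r) (h : q < 0 → r < 0 → q * r < p * s) :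
    ∃ β > 0, ∃ γ > 0, 0 < β * p + γ * q ∧ 0 < β * r + γ * s := by
  rcases lt_or_ge q 0 with hq | hq <;> rcases lt_or_ge r 0 with hr | hr
  · exact ⟨s - q, by linarith, p - r, by linarith, by linarith [h hq hr], by linarith [h hq hr]⟩
  · have hp := hpq.resolve_right hq.not_gt
    refine ⟨1 - q, by linarith, p, hp, by linarith, ?_⟩
    rcases hsr with hs | hr <;> nlinarith
  · have hs := hsr.resolve_right hr.not_gt
    refine ⟨s, hs, 1 - r, by linarith, ?_, by linarith⟩
    rcases hpq with hp | hq <;> nlinarith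
  · exact ⟨1, one_pos, 1, one_pos, by grind, by grind⟩

lemma openTriangle_inter_cone_nonempty_of_disjoint (h : 0 < orient a c e) (hb : 0 ≤ orient a b c)
    (hf : 0 ≤ orient f a e) (habef : Disjoint (segment ℝ e f) (segment ℝ a b))
    (hbcfa : Disjoint (segment ℝ b c) (segment ℝ a f)) :
    (openTriangle a c e ∩ {x | 0 < orient a b x} ∩ {x | 0 < orient f a x}).Nonempty := by
  obtain ⟨β, hβ, γ, hγ, hab, hfa⟩ := exists_pos_combination_pos hb hf
    (orient_pos_or_of_notMem_segment_left h hb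
      (hbcfa.notMem_of_mem_right (left_mem_segment _ _ _)))
    (orient_pos_or_of_notMem_segment_right h hf
      (habef.notMem_of_mem_right (left_mem_segment _ _ _)))
    fun hbe hcf => orient_mul_lt_orient_mul h hb hf hbe hcf habef hbcfa
  set τ := (1 + β + γ)⁻¹
  have hτ : 0 < τ := by positivity
  have hτ' : τ * (1 + β + γ) = 1 := inv_mul_cancel₀ (by positivity)
  have hea : orient e a c = orient a c e := (orient_rotate c e a).trans (orient_rotate a c e)
  refine ⟨a + (τ * β) • (c - a) + (τ * γ) • (e - a), ⟨(mem_openTriangle_iff h).2 ?_, ?_⟩, ?_⟩ <;>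
    simp only [mem_ofPred_eq, affineMap_add_smul_sub, orient_left, orient_right,
      orient_rotate a c e, hea]
  · refine ⟨?_, ?_, ?_⟩ <;> nlinarith [mul_pos hτ hβ, mul_pos hτ hγ, mul_pos hτ h]
  · nlinarith
  · nlinarith

end Cone

section Wedge

variable {n : ℕ} [NeZero n] {v : Fin n → Pt}

lemma wedge_eq (v : Fin n → Pt) (i : Fin n) : Wedge v i =
    {x | 0 < orient (v (i - 1)) (v i) x} ∩ {x | 0 < orient (v i) (v (i + 1)) x} ∩
      polyInterior v := by
  have hR : Rhp (v (i + 1)) (v i) = {x | 0 < orient (v i) (v (i + 1)) x} := by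
    ext x
    rw [mem_ofPred_eq, orient_symm, neg_pos]
    rfl
  rw [Wedge, ← hR]
  rfl

lemma inter_wedge_eq {s : Set Pt} (hs : s ⊆ polyInterior v) (i : Fin n) : s ∩ Wedge v i =
    s ∩ {x | 0 < orient (v i) (v (i + 1)) x} ∩ {x | 0 < orient (v (i - 1)) (v i) x} := by
  rw [wedge_eq, inter_comm {x | 0 < orient (v (i - 1)) (v i) x}, inter_comm, inter_assoc,
    inter_eq_right.2 hs, inter_comm, inter_assoc]

end Wedge

section Hexagon

variable {v : Fin 6 → Pt}

lemma signedArea2_hexagon (v : Fin 6 → Pt) :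
    signedArea2 v = orient (v 0) (v 2) (v 4) - orient (v 0) (v 2) (v 1)
      - orient (v 2) (v 4) (v 3) - orient (v 4) (v 0) (v 5) := by
  simp only [signedArea2, Fin.sum_univ_six, det2, orient_eq, zero_add, Fin.reduceAdd]
  ring

namespace IsSimplePolygon

lemma orient_ears_nonpos (hs : IsSimplePolygon v) (h : 0 < orient (v 0) (v 2) (v 4))
    (hT : openTriangle (v 0) (v 2) (v 4) ⊆ polyInterior v) :
    orient (v 0) (v 2) (v 1) ≤ 0 ∧ orient (v 2) (v 4) (v 3) ≤ 0 ∧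
      orient (v 4) (v 0) (v 5) ≤ 0 := by
  have hrot₂ : orient (v 2) (v 4) (v 0) = orient (v 0) (v 2) (v 4) := orient_rotate _ _ _
  have hrot₄ : orient (v 4) (v 0) (v 2) = orient (v 2) (v 4) (v 0) := orient_rotate _ _ _
  refine ⟨hs.orient_ear_nonpos h hT, (hs.comp_add 2).orient_ear_nonpos (hrot₂ ▸ h) ?_,
    (hs.comp_add 4).orient_ear_nonpos (hrot₄ ▸ hrot₂ ▸ h) ?_⟩ <;>
    rw [polyInterior_congr (polyBoundary_comp_add v _)]
  · exact (openTriangle_rotate (v 0) (v 2) (v 4)).trans_subset hT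
  · refine Eq.trans_subset ?_ hT
    exact (openTriangle_rotate (v 2) (v 4) (v 0)).trans (openTriangle_rotate _ _ _)

-- A clockwise triangle is counterclockwise for the reversed hexagon, whose ears then all have
-- the wrong sign.
lemma orient_nonneg_of_isCCW (hs : IsSimplePolygon v) (hccw : IsCCW v)
    (hT : openTriangle (v 0) (v 2) (v 4) ⊆ polyInterior v) : 0 ≤ orient (v 0) (v 2) (v 4) := by
  by_contra! hneg
  have hT' : openTriangle (v 0) (v 4) (v 2) ⊆ polyInterior fun i => v (-i) := by
    rwa [polyInterior_congr (polyBoundary_comp_neg v), openTriangle, pair_comm]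
  have hpos : 0 < orient (v 0) (v 4) (v 2) := by rwa [orient_swap, neg_pos]
  obtain ⟨hf, hd, hb⟩ : orient (v 0) (v 4) (v 5) ≤ 0 ∧ orient (v 4) (v 2) (v 3) ≤ 0 ∧
    orient (v 2) (v 0) (v 1) ≤ 0 := hs.comp_neg.orient_ears_nonpos hpos hT'
  rw [orient_symm] at hf hd hb
  have harea : 0 < signedArea2 v := hccw
  rw [signedArea2_hexagon] at harea
  linarith

end IsSimplePolygon

lemma IsSimplePolygon.openTriangle_inter_cone_nonempty (hs : IsSimplePolygon v)
    (h : 0 < orient (v 0) (v 2) (v 4))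
    (hT : openTriangle (v 0) (v 2) (v 4) ⊆ polyInterior v) :
    (openTriangle (v 0) (v 2) (v 4) ∩ {x | 0 < orient (v 0) (v 1) x} ∩
      {x | 0 < orient (v 5) (v 0) x}).Nonempty := by
  obtain ⟨hb, -, hf⟩ := hs.orient_ears_nonpos h hT
  refine openTriangle_inter_cone_nonempty_of_disjoint h ?_ ?_ ?_ ?_
  · rwa [orient_swap, neg_nonneg]
  · rwa [orient_reverse, neg_nonneg]
  · exact hs.disjoint_segment (i := 4) (j := 0) (by decide) (by decide) (by decide)
  · rw [segment_symm ℝ (v 0)]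
    exact hs.disjoint_segment (i := 1) (j := 5) (by decide) (by decide) (by decide)

end Hexagon

end

/-- Lemma 1 (lemma:alfa).  Let `abcdef` be a simple counterclockwise hexagon with
independent triple `{a, c, e}`.  If the open triangle `△(ace)` is contained in the
hexagon, then `△(ace) ∩ Wedge(a)` is a triangle `conv{a, c', e'}` minus its boundary,
where `c'e'` is a nondegenerate subsegment of `ce`. -/
theorem lemma_alfa (v : Fin 6 → Pt)
    (hsimple : IsSimplePolygon v) (hccw : IsCCW v)
    (htri : openTriangle (v 0) (v 2) (v 4) ⊆ polyRegion v) :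
    ∃ c' e' : Pt, c' ∈ segment ℝ (v 2) (v 4) ∧ e' ∈ segment ℝ (v 2) (v 4) ∧ c' ≠ e' ∧
      openTriangle (v 0) (v 2) (v 4) ∩ Wedge v 0 =
        convexHull ℝ {v 0, c', e'} \ frontier (convexHull ℝ {v 0, c', e'}) := by
  have hT : openTriangle (v 0) (v 2) (v 4) ⊆ polyInterior v :=
    hsimple.subset_polyInterior_of_isOpen (isOpen_openTriangle _ _ _) htri
  simp only [← openTriangle_eq_diff_frontier]
  rcases (hsimple.orient_nonneg_of_isCCW hccw hT).eq_or_lt' with h₀ | h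
  · have hce : v 2 ≠ v 4 := hsimple.2.1.ne (by decide)
    refine ⟨v 2, v 4, left_mem_segment _ _ _, right_mem_segment _ _ _, hce, ?_⟩
    rw [openTriangle_eq_empty hce h₀, Set.empty_inter]
  · rw [inter_wedge_eq hT]
    obtain ⟨c', hc', e', he', hpos, heq⟩ := exists_openTriangle_eq_inter_inter h
      (orient_left _ _) (orient_right _ _) (hsimple.openTriangle_inter_cone_nonempty h hT)
    exact ⟨c', e', hc', he', (ne_of_orient_ne_zero hpos.ne').2.1, heq⟩
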